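/- Let Δ be a simplicial complex on [n] with Stanley-Reisner ideal I = I_Δ in R = K[x_1,…,x_n]. If Δ has a shedding vertex v such that both link_Δ(v) and del_Δ(v) are sequentially Cohen-Macaulay, then depth(R/I) = min{ depth(R/(I : x_v)), depth(R/(I + (x_v))) } = n − bigh(I), where bigh(I) is the maximum height of an associated prime of I. -/

import Mathlib

open MvPolynomial

namespace Paper

/-- An (abstract) simplicial complex: a nonempty, downward closed collection of
finite subsets of the vertex set. -/
def IsComplex {n : ℕ} (Δ : Set (Finset (Fin n))) : Prop :=
  Δ.Nonempty ∧ ∀ F ∈ Δ, ∀ G, G ⊆ F → G ∈ Δ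

/-- The deletion `del_Δ(v)`. -/
def delC {n : ℕ} (Δ : Set (Finset (Fin n))) (v : Fin n) : Set (Finset (Fin n)) :=
  {G ∈ Δ | v ∉ G}

/-- The link `link_Δ(v)`. -/
def linkC {n : ℕ} (Δ : Set (Finset (Fin n))) (v : Fin n) : Set (Finset (Fin n)) :=
  {G | G ∈ Δ ∧ v ∉ G ∧ insert v G ∈ Δ}

/-- A facet is a maximal face. -/
def IsFacet {n : ℕ} (Δ : Set (Finset (Fin n))) (F : Finset (Fin n)) : Prop :=
  F ∈ Δ ∧ ∀ G ∈ Δ, F ⊆ G → G = F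

/-- A vertex `v` of `Δ` is a shedding vertex if every facet of `del_Δ(v)` is a facet
of `Δ`. -/
def IsSheddingVertex {n : ℕ} (Δ : Set (Finset (Fin n))) (v : Fin n) : Prop :=
  {v} ∈ Δ ∧ ∀ F, IsFacet (delC Δ v) F → IsFacet Δ F

/-- `Δ` is a simplex: it has a unique maximal face containing all faces. -/
def IsSimplexC {n : ℕ} (Δ : Set (Finset (Fin n))) : Prop :=
  ∃ F ∈ Δ, ∀ G ∈ Δ, G ⊆ F

/-- Vertex decomposability, defined recursively. -/
inductive IsVertexDecomposable {n : ℕ} : Set (Finset (Fin n)) → Prop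
  | simplex {Δ : Set (Finset (Fin n))} (h : IsComplex Δ) (hs : IsSimplexC Δ) :
      IsVertexDecomposable Δ
  | step {Δ : Set (Finset (Fin n))} (h : IsComplex Δ) (v : Fin n)
      (hv : IsSheddingVertex Δ v)
      (h1 : IsVertexDecomposable (linkC Δ v)) (h2 : IsVertexDecomposable (delC Δ v)) :
      IsVertexDecomposable Δ

/-- The Stanley-Reisner ideal of `Δ`, generated by the squarefree monomials
`x_F = ∏_{i ∈ F} x_i` with `F ∉ Δ`. -/
noncomputable def SRIdeal (n : ℕ) (K : Type) [Field K] (Δ : Set (Finset (Fin n))) :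
    Ideal (MvPolynomial (Fin n) K) :=
  Ideal.span {m | ∃ F : Finset (Fin n), F ∉ Δ ∧ m = ∏ i ∈ F, X i}

/-- `P_{F̄}`, the prime ideal generated by the variables `x_i` with `i ∉ F`. -/
noncomputable def facePrime (n : ℕ) (K : Type) [Field K] (F : Finset (Fin n)) :
    Ideal (MvPolynomial (Fin n) K) :=
  Ideal.span ((fun i => (X i : MvPolynomial (Fin n) K)) '' {i | i ∉ F})

/-- The depth of a module `M` with respect to an ideal `J`: the supremum of lengths of
`M`-regular sequences consisting of elements of `J`. -/
noncomputable def depth {A : Type} [CommRing A] (J : Ideal A)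
    (M : Type) [AddCommGroup M] [Module A M] : ℕ∞ :=
  sSup {k : ℕ∞ | ∃ rs : List A, (rs.length : ℕ∞) = k ∧ (∀ r ∈ rs, r ∈ J) ∧
    RingTheory.Sequence.IsRegular M rs}

/-- The irrelevant maximal ideal `𝔪 = (x_1, …, x_n)` of `K[x_1, …, x_n]`. -/
noncomputable def mIdeal (n : ℕ) (K : Type) [Field K] : Ideal (MvPolynomial (Fin n) K) :=
  Ideal.span (Set.range X)

/-- The Krull dimension of a module, `dim M = dim (A / ann M)`. -/
noncomputable def mdim (A : Type) [CommRing A] (M : Type) [AddCommGroup M] [Module A M] :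
    WithBot ℕ∞ :=
  ringKrullDim (A ⧸ Module.annihilator A M)

/-- A module over `K[x_1, …, x_n]` is Cohen-Macaulay if its depth with respect to the
irrelevant maximal ideal equals its Krull dimension. -/
def IsCMMod (n : ℕ) (K : Type) [Field K] (M : Type) [AddCommGroup M]
    [Module (MvPolynomial (Fin n) K) M] : Prop :=
  (depth (mIdeal n K) M : WithBot ℕ∞) = mdim (MvPolynomial (Fin n) K) M

/-- A module over `K[x_1, …, x_n]` is sequentially Cohen-Macaulay if it admits a finite
filtration `0 = M_0 ⊂ M_1 ⊂ ⋯ ⊂ M_r = M` with Cohen-Macaulay quotients of strictly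
increasing dimensions. -/
def IsSeqCMMod (n : ℕ) (K : Type) [Field K] (M : Type) [AddCommGroup M]
    [Module (MvPolynomial (Fin n) K) M] : Prop :=
  ∃ (r : ℕ) (f : Fin (r + 1) → Submodule (MvPolynomial (Fin n) K) M),
    f 0 = ⊥ ∧ f (Fin.last r) = ⊤ ∧ StrictMono f ∧
    (∀ i : Fin r,
      IsCMMod n K (↥(f i.succ) ⧸ Submodule.comap (f i.succ).subtype (f i.castSucc))) ∧
    ∀ i j : Fin r, i < j →
      mdim (MvPolynomial (Fin n) K)
          (↥(f i.succ) ⧸ Submodule.comap (f i.succ).subtype (f i.castSucc)) <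
        mdim (MvPolynomial (Fin n) K)
          (↥(f j.succ) ⧸ Submodule.comap (f j.succ).subtype (f j.castSucc))

/-- Height of an ideal (meaningful for prime ideals). -/
noncomputable def htP {A : Type} [CommRing A] (𝔭 : Ideal A) : ℕ∞ :=
  ⨆ (h : 𝔭.IsPrime), Order.height (⟨𝔭, h⟩ : PrimeSpectrum A)

/-- The big height of `I`: the maximum of the heights of the associated primes of `I`. -/
noncomputable def bigh {A : Type} [CommRing A] (I : Ideal A) : ℕ∞ :=
  ⨆ 𝔭 ∈ associatedPrimes A (A ⧸ I), htP 𝔭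

section Helpers
open CategoryTheory Abelian RingTheory.Sequence Pointwise

/-- Ext-vanishing -/
def DD {A : Type} [CommRing A] (J : Ideal A) (k : ℕ) (M : Type) [AddCommGroup M] [Module A M] : Prop :=
  ∀ i < k, Subsingleton (Ext (ModuleCat.of A (A ⧸ J)) (ModuleCat.of A M) i)

section DD
variable {A : Type} [CommRing A] {J : Ideal A} {k : ℕ}
variable {M N P : Type} [AddCommGroup M] [Module A M] [AddCommGroup N] [Module A N]
  [AddCommGroup P] [Module A P]

theorem DD.mono {l : ℕ} (h : DD J k M) (hl : l ≤ k) : DD J l M :=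
  fun i hi => h i (by omega)

theorem DD.of_subsingleton [Subsingleton M] : DD J k M := by
  intro i _
  have hz : (𝟙 (ModuleCat.of A M)) = 0 := by
    ext x
    exact Subsingleton.elim _ _
  refine subsingleton_of_forall_eq 0 fun e => ?_
  rw [← Ext.comp_mk₀_id e, hz, Ext.mk₀_zero, Ext.comp_zero]

theorem DD.of_exact (f : M →ₗ[A] N) (g : N →ₗ[A] P) (hf : Function.Injective f)
    (hg : Function.Surjective g) (hfg : Function.Exact f g) (h1 : DD J k M) (h2 : DD J k P) :
    DD J k N := by
  intro i hi
  let S : ShortComplex (ModuleCat A) := ShortComplex.mk (ModuleCat.ofHom f) (ModuleCat.ofHom g)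
    (by ext x; exact hfg.apply_apply_eq_zero x)
  have hS : S.ShortExact :=
    { exact := (ShortComplex.ShortExact.moduleCat_exact_iff_function_exact S).2 hfg
      mono_f := (ModuleCat.mono_iff_injective _).2 hf
      epi_g := (ModuleCat.epi_iff_surjective _).2 hg }
  have := h1 i hi
  have := h2 i hi
  refine subsingleton_of_forall_eq 0 fun e => ?_
  obtain ⟨x, hx⟩ := Ext.covariant_sequence_exact₂ (ModuleCat.of A (A ⧸ J)) hS e
    (@Subsingleton.elim _ (h2 i hi) _ _)
  rw [← hx, @Subsingleton.elim _ (h1 i hi) x 0, Ext.zero_comp]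

theorem DD.congr (e : M ≃ₗ[A] N) (h : DD J k M) : DD J k N :=
  DD.of_exact (P := PUnit) e.toLinearMap 0 e.injective (fun _ => ⟨0, rfl⟩)
    (fun x => by simp) h DD.of_subsingleton

theorem DD.of_smul_regular {r : A} (hr : r ∈ J) (reg : IsSMulRegular M r)
    (h : DD J k (QuotSMulTop r M)) : DD J (k + 1) M := by
  have hann : r ∈ Module.annihilator A (A ⧸ J) := by rwa [Ideal.annihilator_quotient]
  intro i hi
  match i with
  | 0 =>
    have : Subsingleton ((A ⧸ J) →ₗ[A] M) :=
      IsSMulRegular.linearMap_subsingleton_of_mem_annihilator reg hann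
    exact (Ext.addEquiv₀.trans ModuleCat.homAddEquiv).subsingleton
  | i + 1 =>
    let g := (AddCommGrpCat.ofHom ((Ext.mk₀ ((ModuleCat.of A M).smulShortComplex r).f).postcomp
      (ModuleCat.of A (A ⧸ J)) (add_zero (i + 1))))
    have mono_g : Mono g := by
      apply (Ext.covariant_sequence_exact₁' (ModuleCat.of A (A ⧸ J))
        (IsSMulRegular.smulShortComplex_shortExact (M := ModuleCat.of A M) reg) i (i + 1)
        rfl).mono_g ((AddCommGrpCat.isZero_of_iff_subsingleton.mpr ?_).eq_zero_of_src _)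
      exact h i (by omega)
    have zero_g : g = 0 := Ext.postcomp_smul_id_eq_zero_of_mem_annihilator hann (i + 1)
    exact AddCommGrpCat.subsingleton_of_isZero (Limits.IsZero.of_mono_eq_zero _ zero_g)

theorem DD.of_weaklyRegular (rs : List A) (hrs : ∀ r ∈ rs, r ∈ J) :
    ∀ (M : Type) [AddCommGroup M] [Module A M], IsWeaklyRegular M rs → DD J rs.length M := by
  induction rs with
  | nil => intro M _ _ _ i hi; simp at hi
  | cons r rs ih =>
    intro M _ _ h
    rw [isWeaklyRegular_cons_iff] at h
    exact DD.of_smul_regular (hrs r (by simp)) h.1 (ih (fun s hs => hrs s (by simp [hs])) _ h.2)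

theorem DD.of_le_depth (h : (k : ℕ∞) ≤ depth J M) : DD J k M := by
  cases k with
  | zero => intro i hi; omega
  | succ k =>
    have : (k : ℕ∞) < depth J M := lt_of_lt_of_le (by exact_mod_cast Nat.lt_succ_self k) h
    obtain ⟨l, ⟨rs, rfl, hrs, hreg⟩, hl⟩ := lt_sSup_iff.1 this
    exact (DD.of_weaklyRegular rs hrs M hreg.toIsWeaklyRegular).mono (by exact_mod_cast hl)

theorem DD.le_depth [IsNoetherianRing A] [Module.Finite A M] (h : DD J k M)
    (hlt : J • (⊤ : Submodule A M) < ⊤) : (k : ℕ∞) ≤ depth J M := by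
  obtain ⟨rs, hl, hrs, hreg⟩ := ModuleCat.exists_isRegular_of_exists_subsingleton_ext J k
    (ModuleCat.of A M) hlt (ModuleCat.of A (A ⧸ J))
    (by rw [Module.support_eq_zeroLocus, Ideal.annihilator_quotient]) h
  exact le_sSup ⟨rs, by rw [hl], hrs, hreg⟩
end DD
theorem htP_eq {A : Type} [CommRing A] (p : Ideal A) [h : p.IsPrime] : htP p = p.height := by
  unfold htP
  rw [iSup_pos h]
  exact (PrimeSpectrum.height_eq_orderHeight ⟨p, h⟩).symm

/-- In a local ring, an associated prime of `N` propagates to one of `N / xN`. -/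
theorem exists_assoc_quot {A : Type} [CommRing A] [IsNoetherianRing A] [IsLocalRing A]
    {N : Type} [AddCommGroup N] [Module A N] [Module.Finite A N] {p : Ideal A}
    (hp : p ∈ associatedPrimes A N) {x : A} (hx : x ∈ IsLocalRing.maximalIdeal A)
    (reg : IsSMulRegular N x) :
    ∃ q ∈ associatedPrimes A (QuotSMulTop x N), p < q := by
  obtain ⟨hpp, y, hy⟩ := isAssociatedPrime_iff.1 hp
  have hy0 : y ≠ 0 := by
    rintro rfl
    apply hpp.ne_top
    rw [hy]; ext; simp [Submodule.mem_colon_singleton]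
  have hxp : x ∉ p := by
    intro hxp
    rw [hy, Submodule.mem_colon_singleton, Submodule.mem_bot] at hxp
    exact hy0 (reg (by simpa using hxp))
  let U : Submodule A N :=
    { carrier := {z | ∀ a ∈ p, a • z = 0}
      add_mem' := fun {a b} ha hb c hc => by rw [smul_add, ha c hc, hb c hc, add_zero]
      zero_mem' := fun c _ => smul_zero c
      smul_mem' := fun c z hz a ha => by rw [smul_comm, hz a ha, smul_zero] }
  have hyU : y ∈ U := fun a ha => by
    rwa [hy, Submodule.mem_colon_singleton, Submodule.mem_bot] at ha
  have hnot : ¬ (U ≤ x • (⊤ : Submodule A N)) := by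
    intro hle
    have hU : U ≤ Ideal.span {x} • U := by
      intro z hz
      obtain ⟨w, -, rfl⟩ := (Submodule.mem_smul_pointwise_iff_exists _ _ _).1 (hle hz)
      refine Submodule.smul_mem_smul (Ideal.mem_span_singleton_self x) ?_
      intro a ha
      have := hz a ha
      rw [smul_comm] at this
      exact reg (by simpa using this)
    have := Submodule.eq_bot_of_le_smul_of_le_jacobson_bot (Ideal.span {x}) U
      (IsNoetherian.noetherian _) hU
      (by rw [IsLocalRing.jacobson_eq_maximalIdeal _ bot_ne_top, Ideal.span_singleton_le_iff_mem]
          exact hx)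
    rw [this] at hyU
    exact hy0 (by simpa using hyU)
  obtain ⟨z, hzU, hz⟩ := Set.not_subset.1 hnot
  have hz0 : (Submodule.Quotient.mk z : QuotSMulTop x N) ≠ 0 := by
    rwa [Ne, Submodule.Quotient.mk_eq_zero]
  obtain ⟨q, hq, hqle⟩ := exists_le_isAssociatedPrime_of_isNoetherianRing A _ hz0
  refine ⟨q, hq, lt_of_le_of_ne (fun a ha => hqle ?_) ?_⟩
  · rw [Submodule.mem_colon_singleton, Submodule.mem_bot, ← Submodule.Quotient.mk_smul, hzU a ha]
    rfl
  · rintro rfl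
    apply hxp
    apply hqle
    rw [Submodule.mem_colon_singleton, Submodule.mem_bot, ← Submodule.Quotient.mk_smul,
      Submodule.Quotient.mk_eq_zero]
    exact Submodule.smul_mem_pointwise_smul _ _ _ trivial

theorem length_add_height_le {A : Type} [CommRing A] [IsNoetherianRing A] [IsLocalRing A]
    (rs : List A) (hrs : ∀ r ∈ rs, r ∈ IsLocalRing.maximalIdeal A) :
    ∀ (N : Type) [AddCommGroup N] [Module A N] [Module.Finite A N] (p : Ideal A),
      p ∈ associatedPrimes A N → IsWeaklyRegular N rs →
      (rs.length : ℕ∞) + p.height ≤ (IsLocalRing.maximalIdeal A).height := by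
  induction rs with
  | nil =>
    intro N _ _ _ p hp _
    simpa using Ideal.height_mono (IsLocalRing.le_maximalIdeal hp.isPrime.ne_top)
  | cons r rs ih =>
    intro N _ _ _ p hp h
    rw [isWeaklyRegular_cons_iff] at h
    obtain ⟨q, hq, hpq⟩ := exists_assoc_quot hp (hrs r (by simp)) h.1
    have := ih (fun s hs => hrs s (by simp [hs])) _ q hq h.2
    have hp' := hp.isPrime
    have hq' := IsAssociatedPrime.isPrime hq
    have h2 := Ideal.height_add_one_le_of_lt_of_isPrime hpq
    calc ((r :: rs).length : ℕ∞) + p.height = rs.length + (p.height + 1) := by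
            push_cast [List.length_cons]; ring
      _ ≤ rs.length + q.height := by gcongr
      _ ≤ _ := this

theorem depth_add_height_le {A : Type} [CommRing A] [IsNoetherianRing A] (m : Ideal A) [m.IsPrime]
    (M : Type) [AddCommGroup M] [Module A M] [Module.Finite A M] (p : Ideal A)
    (hp : p ∈ associatedPrimes A M) (hpm : p ≤ m) (k : ℕ) (hk : (k : ℕ∞) ≤ depth m M) :
    (k : ℕ∞) + htP p ≤ m.height := by
  have hpp := IsAssociatedPrime.isPrime hp
  rw [htP_eq]
  have hdisj : Disjoint (m.primeCompl : Set A) (p : Set A) :=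
    Set.disjoint_left.2 fun a ha hb => ha (hpm hb)
  have key : ∀ rs : List A, (∀ r ∈ rs, r ∈ m) → IsWeaklyRegular M rs →
      (rs.length : ℕ∞) + p.height ≤ m.height := by
    intro rs hrs hreg
    have h1 := hreg.of_isLocalizedModule (Localization.AtPrime m) m.primeCompl
      (LocalizedModule.mkLinearMap m.primeCompl M)
    have h2 := Module.associatedPrimes.mem_associatedPrimes_of_comap_mem_associatedPrimes_of_isLocalizedModule
      m.primeCompl (LocalizedModule.mkLinearMap m.primeCompl M)
      (p.map (algebraMap A (Localization.AtPrime m)))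
      (by
        have := IsLocalization.under_map_of_isPrime_disjoint m.primeCompl
          (Localization.AtPrime m) hpp hdisj
        rw [Ideal.under_def] at this
        rwa [this])
    have h3 := length_add_height_le _ (by
      intro r hr
      obtain ⟨s, hs, rfl⟩ := List.mem_map.1 hr
      exact (IsLocalization.AtPrime.to_map_mem_maximal_iff _ m s).2 (hrs s hs)) _ _ h2 h1
    rw [IsLocalization.height_map_of_disjoint m.primeCompl p hdisj, List.length_map] at h3
    have h4 := IsLocalization.AtPrime.ringKrullDim_eq_height m (Localization.AtPrime m)
    rw [← IsLocalRing.maximalIdeal_height_eq_ringKrullDim] at h4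
    rwa [WithBot.coe_inj.1 h4] at h3
  cases k with
  | zero => simpa using Ideal.height_mono hpm
  | succ k =>
    have : (k : ℕ∞) < depth m M := lt_of_lt_of_le (by exact_mod_cast Nat.lt_succ_self k) hk
    obtain ⟨l, ⟨rs, rfl, hrs, hreg⟩, hl⟩ := lt_sSup_iff.1 this
    refine le_trans ?_ (key rs hrs hreg.toIsWeaklyRegular)
    gcongr
    exact_mod_cast hl

theorem le_sub_bigh {A : Type} [CommRing A] (I : Ideal A) (n : ℕ) (c : ℕ∞)
    (hne : (associatedPrimes A (A ⧸ I)).Nonempty)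
    (h : ∀ p ∈ associatedPrimes A (A ⧸ I), ∀ k : ℕ, (k : ℕ∞) ≤ c → (k : ℕ∞) + htP p ≤ n) :
    c ≤ (n : ℕ∞) - bigh I := by
  refine ENat.forall_natCast_le_iff_le.1 fun k hk => ?_
  obtain ⟨p, hp⟩ := hne
  have hkn : (k : ℕ∞) ≤ n := le_trans le_self_add (h p hp k hk)
  have h1 : bigh I ≤ ((n - k : ℕ) : ℕ∞) := by
    refine iSup₂_le fun q hq => ?_
    have := h q hq k hk
    generalize htP q = b at this ⊢
    cases b with
    | top => simp at this
    | coe b => norm_cast at this ⊢; omega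
  generalize bigh I = b at h1 ⊢
  cases b with
  | top => simp at h1
  | coe b => norm_cast at h1 hkn ⊢; omega
end Helpers

section Monomials
variable {n : ℕ} {K : Type} [Field K]

theorem mem_SRIdeal {Γ : Set (Finset (Fin n))} (hΓ : ∀ F ∈ Γ, ∀ G, G ⊆ F → G ∈ Γ)
    (f : MvPolynomial (Fin n) K) :
    f ∈ SRIdeal n K Γ ↔ ∀ m ∈ f.support, m.support ∉ Γ := by
  have h1 : SRIdeal n K Γ = Ideal.span ((fun s => monomial s (1 : K)) ''
      {s : Fin n →₀ ℕ | ∃ F : Finset (Fin n), F ∉ Γ ∧ s = ∑ i ∈ F, Finsupp.single i 1}) := by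
    unfold SRIdeal
    congr 1
    ext p
    constructor
    · rintro ⟨F, hF, rfl⟩
      refine ⟨_, ⟨F, hF, rfl⟩, ?_⟩
      simp [X, monomial_sum_one]
    · rintro ⟨_, ⟨F, hF, rfl⟩, rfl⟩
      refine ⟨F, hF, ?_⟩
      simp [X, monomial_sum_one]
  have hval : ∀ (F : Finset (Fin n)) (i : Fin n),
      (∑ j ∈ F, Finsupp.single j 1 : Fin n →₀ ℕ) i = if i ∈ F then 1 else 0 := by
    intro F i
    simp [Finsupp.finsetSum_apply, Finsupp.single_apply]
  rw [h1, mem_ideal_span_monomial_image]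
  refine forall₂_congr fun m _ => ?_
  constructor
  · rintro ⟨_, ⟨F, hF, rfl⟩, hle⟩ hm
    refine hF (hΓ _ hm F fun i hi => ?_)
    have := hle i
    rw [hval, if_pos hi] at this
    rw [Finsupp.mem_support_iff]; omega
  · intro hm
    refine ⟨_, ⟨m.support, hm, rfl⟩, fun i => ?_⟩
    rw [hval]
    split_ifs with hi
    · rw [Finsupp.mem_support_iff] at hi; omega
    · omega

theorem mem_facePrime (F : Finset (Fin n)) (f : MvPolynomial (Fin n) K) :
    f ∈ facePrime n K F ↔ ∀ m ∈ f.support, ¬ m.support ⊆ F := by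
  unfold facePrime
  rw [mem_ideal_span_X_image]
  refine forall₂_congr fun m _ => ?_
  rw [Finset.not_subset]
  constructor
  · rintro ⟨i, hi, h⟩; exact ⟨i, by simpa using h, hi⟩
  · rintro ⟨i, hi, h⟩; exact ⟨i, h, by simpa using hi⟩

instance facePrime_isPrime (F : Finset (Fin n)) : (facePrime n K F).IsPrime := by
  let φ : MvPolynomial (Fin n) K →ₐ[K] MvPolynomial (Fin n) K :=
    aeval (fun i => if i ∈ F then X i else 0)
  have : facePrime n K F = RingHom.ker φ.toRingHom := by
    apply le_antisymm
    · unfold facePrime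
      rw [Ideal.span_le]
      rintro _ ⟨i, hi, rfl⟩
      have hi' : i ∉ F := hi
      simp [RingHom.mem_ker, φ, hi']
    · intro f hf
      have hsub : ∀ g : MvPolynomial (Fin n) K, g - φ g ∈ facePrime n K F := by
        intro g
        induction g using MvPolynomial.induction_on with
        | C a => simp [φ]
        | add p q hp hq =>
          rw [map_add, add_sub_add_comm]; exact add_mem hp hq
        | mul_X p i hp =>
          have hX : (X i - φ (X i) : MvPolynomial (Fin n) K) ∈ facePrime n K F := by
            by_cases hi : i ∈ F
            · simp [φ, hi]
            · simp only [φ, aeval_X, hi, if_false, sub_zero]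
              exact Ideal.subset_span ⟨i, hi, rfl⟩
          rw [map_mul]
          have : p * X i - φ p * φ (X i) = (p - φ p) * X i + φ p * (X i - φ (X i)) := by ring
          rw [this]
          exact add_mem (Ideal.mul_mem_right _ _ hp) (Ideal.mul_mem_left _ _ hX)
      have h0 : φ f = 0 := hf
      have := hsub f
      rwa [h0, sub_zero] at this
  rw [this]
  exact RingHom.ker_isPrime _

theorem exists_facet (Γ : Set (Finset (Fin n))) (F : Finset (Fin n)) (hF : F ∈ Γ) :
    ∃ G, IsFacet Γ G ∧ F ⊆ G := by
  obtain ⟨G, hFG, hG⟩ := (Set.toFinite Γ).exists_le_maximal hF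
  exact ⟨G, ⟨hG.prop, fun H hH hGH => le_antisymm (hG.le_of_ge hH hGH) hGH⟩, hFG⟩

theorem mem_SRIdeal_iff_facets {Γ : Set (Finset (Fin n))} (hΓ : ∀ F ∈ Γ, ∀ G, G ⊆ F → G ∈ Γ)
    (f : MvPolynomial (Fin n) K) :
    f ∈ SRIdeal n K Γ ↔ ∀ F, IsFacet Γ F → f ∈ facePrime n K F := by
  simp only [mem_SRIdeal hΓ, mem_facePrime]
  constructor
  · intro h F hF m hm hs
    exact h m hm (hΓ F hF.1 _ hs)
  · intro h m hm hs
    obtain ⟨G, hG, hsub⟩ := exists_facet Γ _ hs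
    exact h G hG m hm hsub

theorem mem_colon_mk (I : Ideal (MvPolynomial (Fin n) K)) (y a : MvPolynomial (Fin n) K) :
    a ∈ (⊥ : Submodule (MvPolynomial (Fin n) K) (MvPolynomial (Fin n) K ⧸ I)).colon
      {(Ideal.Quotient.mk I y)} ↔ a * y ∈ I := by
  rw [Submodule.mem_colon_singleton, Submodule.mem_bot]
  exact Ideal.Quotient.eq_zero_iff_mem (I := I) (a := a * y)

theorem facePrime_mem_assoc {Γ : Set (Finset (Fin n))} (hΓ : ∀ F ∈ Γ, ∀ G, G ⊆ F → G ∈ Γ)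
    {F : Finset (Fin n)} (hF : IsFacet Γ F) :
    facePrime n K F ∈ associatedPrimes (MvPolynomial (Fin n) K)
      (MvPolynomial (Fin n) K ⧸ SRIdeal n K Γ) := by
  refine isAssociatedPrime_iff.2 ⟨inferInstance, Ideal.Quotient.mk _ (∏ i ∈ F, X i), ?_⟩
  have hprod : ∀ G : Finset (Fin n),
      (∏ i ∈ F, X i : MvPolynomial (Fin n) K) ∈ facePrime n K G ↔ ¬ F ⊆ G := by
    intro G
    rw [Ideal.IsPrime.prod_mem_iff, Finset.not_subset]
    refine exists_congr fun i => and_congr_right fun _ => ?_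
    rw [mem_facePrime]
    simp [support_X]
  ext a
  rw [mem_colon_mk, mem_SRIdeal_iff_facets hΓ]
  constructor
  · intro ha G hG
    by_cases h : F ⊆ G
    · have := hF.2 G hG.1 h
      subst this
      exact Ideal.mul_mem_right _ _ ha
    · exact Ideal.mul_mem_left _ _ ((hprod G).2 h)
  · intro h
    refine ((facePrime_isPrime F).mem_or_mem (h F hF)).resolve_right fun h' => ?_
    exact (hprod F).1 h' subset_rfl

theorem assoc_eq_facePrime {Γ : Set (Finset (Fin n))} (hΓ : ∀ F ∈ Γ, ∀ G, G ⊆ F → G ∈ Γ)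
    {p : Ideal (MvPolynomial (Fin n) K)}
    (hp : p ∈ associatedPrimes (MvPolynomial (Fin n) K)
      (MvPolynomial (Fin n) K ⧸ SRIdeal n K Γ)) :
    ∃ F, IsFacet Γ F ∧ p = facePrime n K F := by
  classical
  obtain ⟨hpp, y, hy⟩ := isAssociatedPrime_iff.1 hp
  obtain ⟨y, rfl⟩ := Ideal.Quotient.mk_surjective y
  let S : Finset (Finset (Fin n)) :=
    Finset.univ.filter fun F => IsFacet Γ F ∧ y ∉ facePrime n K F
  have hpS : p = S.inf (facePrime n K) := by
    ext a
    rw [hy, mem_colon_mk, mem_SRIdeal_iff_facets hΓ, Submodule.mem_finsetInf]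
    constructor
    · intro h F hF
      have hF' := (Finset.mem_filter.1 hF).2
      exact ((facePrime_isPrime F).mem_or_mem (h F hF'.1)).resolve_right hF'.2
    · intro h F hF
      by_cases hyF : y ∈ facePrime n K F
      · exact Ideal.mul_mem_left _ _ hyF
      · exact Ideal.mul_mem_right _ _ (h F (Finset.mem_filter.2 ⟨Finset.mem_univ _, hF, hyF⟩))
  obtain ⟨F, hF, hle⟩ := (Ideal.IsPrime.inf_le' hpp).1 hpS.ge
  refine ⟨F, (Finset.mem_filter.1 hF).2.1, le_antisymm ?_ hle⟩
  rw [hpS]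
  exact Finset.inf_le hF

theorem facePrime_empty : facePrime n K ∅ = mIdeal n K := by
  unfold facePrime mIdeal
  congr 1
  ext; simp

instance mIdeal_isPrime : (mIdeal n K).IsPrime := by
  rw [← facePrime_empty]; infer_instance

theorem facePrime_anti {F G : Finset (Fin n)} (h : F ⊆ G) :
    facePrime n K G ≤ facePrime n K F :=
  Ideal.span_mono (Set.image_mono fun _ hi hF => hi (h hF))

theorem facePrime_le_mIdeal (F : Finset (Fin n)) : facePrime n K F ≤ mIdeal n K := by
  rw [← facePrime_empty]; exact facePrime_anti (Finset.empty_subset F)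

theorem X_mem_facePrime (F : Finset (Fin n)) (i : Fin n) :
    (X i : MvPolynomial (Fin n) K) ∈ facePrime n K F ↔ i ∉ F := by
  rw [mem_facePrime]; simp [support_X]

theorem le_height_facePrime (F : Finset (Fin n)) :
    ((Finset.univ \ F).card : ℕ∞) ≤ (facePrime n K F).height := by
  classical
  have : ∀ S : Finset (Fin n), (S.card : ℕ∞) ≤ (facePrime n K (Finset.univ \ S)).height := by
    intro S
    induction S using Finset.induction_on with
    | empty => simp
    | insert a S ha ih =>
      have hlt : facePrime n K (Finset.univ \ S) < facePrime n K (Finset.univ \ insert a S) := by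
        refine lt_of_le_of_ne (facePrime_anti (by grind)) fun h => ?_
        have h1 : (X a : MvPolynomial (Fin n) K) ∈ facePrime n K (Finset.univ \ insert a S) := by
          rw [X_mem_facePrime]; simp
        rw [← h, X_mem_facePrime] at h1
        simp [ha] at h1
      have := Ideal.height_add_one_le_of_lt_of_isPrime hlt
      rw [Finset.card_insert_of_notMem ha]
      push_cast
      exact le_trans (by gcongr) this
  have h := this (Finset.univ \ F)
  rwa [sdiff_sdiff_eq_self (Finset.subset_univ F)] at h

theorem dim_R : ringKrullDim (MvPolynomial (Fin n) K) = n := by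
  rw [MvPolynomial.ringKrullDim_of_isNoetherianRing]
  simp

theorem le_dim_facePrime (F : Finset (Fin n)) :
    ((F.card : ℕ) : WithBot ℕ∞) ≤ ringKrullDim (MvPolynomial (Fin n) K ⧸ facePrime n K F) := by
  let φ : MvPolynomial (Fin n) K →ₐ[K] MvPolynomial F K :=
    aeval (fun i => if h : i ∈ F then X ⟨i, h⟩ else 0)
  have hφ : ∀ a ∈ facePrime n K F, φ.toRingHom a = 0 := by
    intro a ha
    have : facePrime n K F ≤ RingHom.ker φ.toRingHom := by
      unfold facePrime
      rw [Ideal.span_le]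
      rintro _ ⟨i, hi, rfl⟩
      have hi' : i ∉ F := hi
      simp [RingHom.mem_ker, φ, hi']
    exact this ha
  have hsurj : Function.Surjective (Ideal.Quotient.lift _ φ.toRingHom hφ) := by
    apply Ideal.Quotient.lift_surjective_of_surjective
    intro g
    refine ⟨rename (fun i : F => (i : Fin n)) g, ?_⟩
    change φ (rename _ g) = g
    simp only [φ, aeval_rename]
    have : ((fun i => if h : i ∈ F then X ⟨i, h⟩ else 0) ∘ fun i : F => (i : Fin n)) =
        (X : F → MvPolynomial F K) := by
      ext1 i; simp
    rw [this]; simp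
  have := ringKrullDim_le_of_surjective _ hsurj
  rw [MvPolynomial.ringKrullDim_of_isNoetherianRing] at this
  simpa using this

theorem height_m_le : (mIdeal n K).height ≤ (n : ℕ∞) := by
  have := Ideal.height_le_ringKrullDim_of_isPrime (I := mIdeal n K)
  rw [dim_R] at this
  exact_mod_cast this

theorem dim_quot_le {A : Type} [CommRing A] {N : Type} [AddCommGroup N] [Module A N]
    (N' : Submodule A N) (hN : N' = ⊥) (p : Ideal A) (hp : p ∈ associatedPrimes A N) :
    ringKrullDim (A ⧸ p) ≤ mdim A (N ⧸ N') := by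
  have hann : Module.annihilator A (N ⧸ N') ≤ p := by
    rw [(Submodule.quotEquivOfEqBot _ hN).annihilator_eq]
    rw [← Submodule.annihilator_top]
    exact IsAssociatedPrime.annihilator_le hp
  exact ringKrullDim_le_of_surjective _ (Ideal.Quotient.factor_surjective hann)

theorem DD.of_filtration {A : Type} [CommRing A] {J : Ideal A} {k : ℕ} {M : Type}
    [AddCommGroup M] [Module A M] {r : ℕ} (f : Fin (r + 1) → Submodule A M)
    (h0 : f 0 = ⊥) (hlast : f (Fin.last r) = ⊤) (hmono : StrictMono f)
    (hk : ∀ i : Fin r, DD J k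
        (↥(f i.succ) ⧸ Submodule.comap (f i.succ).subtype (f i.castSucc))) : DD J k M := by
  have hall : ∀ i : Fin (r + 1), DD J k (f i) := by
    intro i
    induction i using Fin.induction with
    | zero =>
      rw [h0]; exact DD.of_subsingleton
    | succ i ih =>
      refine DD.of_exact (Submodule.inclusion (hmono (Fin.castSucc_lt_succ)).le)
        (Submodule.mkQ (Submodule.comap (f i.succ).subtype (f i.castSucc)))
        (Submodule.inclusion_injective _) (Submodule.mkQ_surjective _) ?_ ih (hk i)
      rw [LinearMap.exact_iff, Submodule.ker_mkQ, Submodule.range_inclusion]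
  have := hall (Fin.last _)
  rw [hlast] at this
  exact this.congr Submodule.topEquiv

theorem exists_assoc_filtration {A : Type} [CommRing A] [IsNoetherianRing A] {M : Type}
    [AddCommGroup M] [Module A M] [Nontrivial M] {r : ℕ} (f : Fin (r + 1) → Submodule A M)
    (h0 : f 0 = ⊥) (hlast : f (Fin.last r) = ⊤) (hmono : StrictMono f)
    (hdim : ∀ i j : Fin r, i < j →
      mdim A (↥(f i.succ) ⧸ Submodule.comap (f i.succ).subtype (f i.castSucc)) <
        mdim A (↥(f j.succ) ⧸ Submodule.comap (f j.succ).subtype (f j.castSucc))) :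
    ∃ p ∈ associatedPrimes A M, ∀ i : Fin r, ringKrullDim (A ⧸ p) ≤
      mdim A (↥(f i.succ) ⧸ Submodule.comap (f i.succ).subtype (f i.castSucc)) := by
  cases r with
  | zero =>
    exfalso
    have : (⊥ : Submodule A M) = ⊤ := h0.symm.trans hlast
    exact bot_ne_top this
  | succ r =>
    have hlt : f 0 < f (Fin.succ 0) := hmono (Fin.succ_pos 0)
    have hNT : Nontrivial (f (Fin.succ (0 : Fin (r + 1)))) := by
      rw [Submodule.nontrivial_iff_ne_bot]
      rw [h0] at hlt
      exact hlt.ne'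
    obtain ⟨p, hp⟩ := associatedPrimes.nonempty A (f (Fin.succ (0 : Fin (r + 1))))
    refine ⟨p, associatedPrimes.subset_of_injective
      (Submodule.subtype_injective (f (Fin.succ (0 : Fin (r + 1))))) hp, fun i => ?_⟩
    have hbot : Submodule.comap
        (f (Fin.succ (0 : Fin (r + 1)))).subtype (f (Fin.castSucc (0 : Fin (r + 1)))) = ⊥ := by
      rw [Fin.castSucc_zero, h0, Submodule.comap_bot, Submodule.ker_subtype]
    have h1 := dim_quot_le _ hbot p hp
    rcases (Fin.zero_le i).eq_or_lt with h | h
    · rw [← h]; exact h1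
    · exact h1.trans (hdim 0 i h).le

theorem seqCM_DD (M : Type) [AddCommGroup M] [Module (MvPolynomial (Fin n) K) M] [Nontrivial M]
    (h : IsSeqCMMod n K M) :
    ∃ p ∈ associatedPrimes (MvPolynomial (Fin n) K) M, ∀ k : ℕ,
      (k : WithBot ℕ∞) ≤ ringKrullDim (MvPolynomial (Fin n) K ⧸ p) → DD (mIdeal n K) k M := by
  obtain ⟨r, f, h0, hlast, hmono, hCM, hdim⟩ := h
  obtain ⟨p, hp, hpi⟩ := exists_assoc_filtration f h0 hlast hmono hdim
  refine ⟨p, hp, fun k hk => DD.of_filtration f h0 hlast hmono fun i => DD.of_le_depth ?_⟩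
  have h1 := hk.trans (hpi i)
  have h2 := hCM i
  unfold IsCMMod at h2
  rw [← h2] at h1
  exact_mod_cast h1

end Monomials

section Main
open Pointwise
variable {n : ℕ} {K : Type} [Field K]

theorem smul_top_lt {A : Type} [CommRing A] (J I : Ideal A) (hIJ : I ≤ J) (hJ : J ≠ ⊤) :
    J • (⊤ : Submodule A (A ⧸ I)) < ⊤ := by
  rw [lt_top_iff_ne_top]
  intro h
  have h1 := congrArg (Submodule.map (Submodule.factor hIJ)) h
  rw [Submodule.map_smul'', Submodule.map_top, LinearMap.range_eq_top.2
    (Submodule.factor_surjective hIJ)] at h1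
  have h2 : J • (⊤ : Submodule A (A ⧸ J)) = ⊥ := by
    rw [eq_bot_iff, Submodule.smul_le]
    intro r hr x _
    obtain ⟨x, rfl⟩ := Ideal.Quotient.mk_surjective x
    rw [Submodule.mem_bot]
    exact Ideal.Quotient.eq_zero_iff_mem.2 (Ideal.mul_mem_right x J hr)
  rw [h2] at h1
  have : Nontrivial (A ⧸ J) := Ideal.Quotient.nontrivial_iff.2 hJ
  exact bot_ne_top h1

/-- Ext-vanishing along `0 → A/(I : x) → A/I → A/(I + x) → 0`. -/
theorem DD.of_colon_add {A : Type} [CommRing A] {J : Ideal A} {k : ℕ} (I : Ideal A) (x : A)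
    (h1 : DD J k (A ⧸ I.colon (Ideal.span {x}))) (h2 : DD J k (A ⧸ (I + Ideal.span {x}))) :
    DD J k (A ⧸ I) := by
  have hmem : ∀ a, a ∈ I.colon (Ideal.span {x}) ↔ x * a ∈ I := by
    intro a
    rw [Submodule.mem_colon]
    constructor
    · intro h
      have := h x (Ideal.mem_span_singleton_self x)
      rwa [smul_eq_mul, mul_comm] at this
    · intro h s hs
      obtain ⟨c, rfl⟩ := Ideal.mem_span_singleton'.1 hs
      have := I.mul_mem_left c h
      rw [smul_eq_mul]
      convert this using 1
      ring
  let f : (A ⧸ I.colon (Ideal.span {x})) →ₗ[A] (A ⧸ I) :=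
    Submodule.mapQ (I.colon (Ideal.span {x})) I (LinearMap.mulLeft A x)
      (fun a ha => (hmem a).1 ha)
  let g : (A ⧸ I) →ₗ[A] (A ⧸ (I + Ideal.span {x})) := Submodule.factor (le_sup_left)
  refine DD.of_exact f g ?_ (Submodule.factor_surjective _) ?_ h1 h2
  · rw [injective_iff_map_eq_zero]
    intro a ha
    obtain ⟨a, rfl⟩ := Submodule.Quotient.mk_surjective _ a
    have h3 : x * a ∈ I := (Submodule.Quotient.mk_eq_zero I).1 ha
    exact (Submodule.Quotient.mk_eq_zero _).2 ((hmem a).2 h3)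
  · intro y
    obtain ⟨y, rfl⟩ := Submodule.Quotient.mk_surjective _ y
    have h3 : g (Submodule.Quotient.mk y) = 0 ↔ y ∈ I + Ideal.span {x} :=
      Submodule.Quotient.mk_eq_zero _
    rw [h3]
    constructor
    · intro h
      obtain ⟨i, hi, s, hs, rfl⟩ := Submodule.mem_sup.1 h
      obtain ⟨c, rfl⟩ := Ideal.mem_span_singleton'.1 hs
      refine ⟨Submodule.Quotient.mk c, ?_⟩
      change (Submodule.Quotient.mk (x * c) : A ⧸ I) = _
      rw [Submodule.Quotient.eq]
      convert I.neg_mem hi using 1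
      ring
    · rintro ⟨c, hc⟩
      obtain ⟨c, rfl⟩ := Submodule.Quotient.mk_surjective _ c
      have h4 : (Submodule.Quotient.mk (x * c) : A ⧸ I) = Submodule.Quotient.mk y := hc
      rw [Submodule.Quotient.eq] at h4
      have h5 : y = -(x * c - y) + c * x := by ring
      rw [h5]
      exact Submodule.add_mem_sup (I.neg_mem h4) (Ideal.mul_mem_left _ _
        (Ideal.mem_span_singleton_self x))

/-- Ext-vanishing goes up along a regular element. -/
theorem DD.of_add_span {A : Type} [CommRing A] {J : Ideal A} {k : ℕ} (I : Ideal A) (x : A)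
    (hx : x ∈ J) (hreg : ∀ a, x * a ∈ I → a ∈ I) (h : DD J k (A ⧸ (I + Ideal.span {x}))) :
    DD J (k + 1) (A ⧸ I) := by
  refine DD.of_smul_regular (r := x) hx ?_ ?_
  · rw [isSMulRegular_iff_right_eq_zero_of_smul]
    intro a ha
    obtain ⟨a, rfl⟩ := Submodule.Quotient.mk_surjective _ a
    exact (Submodule.Quotient.mk_eq_zero _).2 (hreg a ((Submodule.Quotient.mk_eq_zero I).1 ha))
  · refine h.congr (((Submodule.quotientQuotientEquivQuotientSup I (Ideal.span {x})).symm).trans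
      (Submodule.quotEquivOfEq _ _ ?_))
    ext y
    obtain ⟨y, rfl⟩ := Submodule.Quotient.mk_surjective _ y
    rw [Submodule.mem_map, Submodule.mem_smul_pointwise_iff_exists]
    constructor
    · rintro ⟨s, hs, h⟩
      obtain ⟨c, rfl⟩ := Ideal.mem_span_singleton'.1 hs
      refine ⟨Submodule.Quotient.mk c, trivial, ?_⟩
      rw [← h, mul_comm]
      rfl
    · rintro ⟨c, -, h⟩
      obtain ⟨c, rfl⟩ := Submodule.Quotient.mk_surjective _ c
      exact ⟨x * c, Ideal.mul_mem_right _ _ (Ideal.mem_span_singleton_self x), h⟩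

/-- The (closed) star of `v`. -/
def starC (Δ : Set (Finset (Fin n))) (v : Fin n) : Set (Finset (Fin n)) :=
  {F | insert v F ∈ Δ}

theorem starC_down {Δ : Set (Finset (Fin n))} (h : ∀ F ∈ Δ, ∀ G, G ⊆ F → G ∈ Δ) (v : Fin n) :
    ∀ F ∈ starC Δ v, ∀ G, G ⊆ F → G ∈ starC Δ v :=
  fun F hF G hG => h _ hF _ (Finset.insert_subset_insert v hG)

theorem delC_down {Δ : Set (Finset (Fin n))} (h : ∀ F ∈ Δ, ∀ G, G ⊆ F → G ∈ Δ) (v : Fin n) :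
    ∀ F ∈ delC Δ v, ∀ G, G ⊆ F → G ∈ delC Δ v :=
  fun F hF G hG => ⟨h _ hF.1 _ hG, fun hv => hF.2 (hG hv)⟩

theorem delC_starC {Δ : Set (Finset (Fin n))} (h : ∀ F ∈ Δ, ∀ G, G ⊆ F → G ∈ Δ) (v : Fin n) :
    delC (starC Δ v) v = linkC Δ v := by
  ext F
  constructor
  · rintro ⟨h1, h2⟩
    exact ⟨h _ h1 _ (Finset.subset_insert v F), h2, h1⟩
  · rintro ⟨_, h2, h3⟩
    exact ⟨h3, h2⟩

theorem SR_add {Δ : Set (Finset (Fin n))} (h : ∀ F ∈ Δ, ∀ G, G ⊆ F → G ∈ Δ) (v : Fin n) :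
    SRIdeal n K Δ + Ideal.span {(X v : MvPolynomial (Fin n) K)} = SRIdeal n K (delC Δ v) := by
  apply le_antisymm
  · refine sup_le ?_ ?_
    · refine Ideal.span_mono ?_
      rintro _ ⟨F, hF, rfl⟩
      exact ⟨F, fun h' => hF h'.1, rfl⟩
    · rw [Ideal.span_singleton_le_iff_mem]
      refine Ideal.subset_span ⟨{v}, fun h' => h'.2 (by simp), by simp⟩
  · refine Ideal.span_le.2 ?_
    rintro _ ⟨F, hF, rfl⟩
    by_cases hv : v ∈ F
    · refine Submodule.mem_sup_right ?_
      exact Ideal.mem_span_singleton.2 (Finset.dvd_prod_of_mem _ hv)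
    · refine Submodule.mem_sup_left (Ideal.subset_span ⟨F, fun h' => hF ⟨h', hv⟩, rfl⟩)

theorem X_mul_mem_SR {Δ : Set (Finset (Fin n))} (h : ∀ F ∈ Δ, ∀ G, G ⊆ F → G ∈ Δ) (v : Fin n)
    (a : MvPolynomial (Fin n) K) :
    X v * a ∈ SRIdeal n K Δ ↔ a ∈ SRIdeal n K (starC Δ v) := by
  rw [mem_SRIdeal h, mem_SRIdeal (starC_down h v), support_X_mul]
  simp only [Finset.mem_map, forall_exists_index, and_imp, forall_apply_eq_imp_iff₂]
  refine forall₂_congr fun m _ => ?_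
  have : (addLeftEmbedding (Finsupp.single v 1) m).support = insert v m.support := by
    ext i
    by_cases hi : i = v
    · subst hi; simp
    · simp [hi, Finsupp.single_apply, Ne.symm hi]
  rw [this]
  rfl

theorem SR_colon {Δ : Set (Finset (Fin n))} (h : ∀ F ∈ Δ, ∀ G, G ⊆ F → G ∈ Δ) (v : Fin n) :
    (SRIdeal n K Δ).colon (Ideal.span {(X v : MvPolynomial (Fin n) K)}) =
      SRIdeal n K (starC Δ v) := by
  ext a
  rw [← X_mul_mem_SR h, Submodule.mem_colon]
  constructor
  · intro h
    have := h (X v) (Ideal.mem_span_singleton_self _)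
    rwa [smul_eq_mul, mul_comm] at this
  · intro h s hs
    obtain ⟨c, rfl⟩ := Ideal.mem_span_singleton'.1 hs
    have := Ideal.mul_mem_left _ c h
    rw [smul_eq_mul]
    convert this using 1
    ring

theorem SR_le_m {Δ : Set (Finset (Fin n))} (h0 : ∅ ∈ Δ) : SRIdeal n K Δ ≤ mIdeal n K := by
  refine Ideal.span_le.2 ?_
  rintro _ ⟨F, hF, rfl⟩
  have : F.Nonempty := by
    rw [Finset.nonempty_iff_ne_empty]; rintro rfl; exact hF h0
  obtain ⟨i, hi⟩ := this
  exact Ideal.mem_of_dvd _ (Finset.dvd_prod_of_mem _ hi) (Ideal.subset_span ⟨i, rfl⟩)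

theorem depth_upper {Γ : Set (Finset (Fin n))} (h : ∀ F ∈ Γ, ∀ G, G ⊆ F → G ∈ Γ)
    {F : Finset (Fin n)} (hF : IsFacet Γ F) (k : ℕ)
    (hk : (k : ℕ∞) ≤ depth (mIdeal n K) (MvPolynomial (Fin n) K ⧸ SRIdeal n K Γ)) :
    (k : ℕ∞) + htP (facePrime n K F) ≤ n :=
  (depth_add_height_le (mIdeal n K) _ _ (facePrime_mem_assoc h hF) (facePrime_le_mIdeal F) k
    hk).trans height_m_le

theorem seqCM_facet {Γ : Set (Finset (Fin n))} (h : ∀ F ∈ Γ, ∀ G, G ⊆ F → G ∈ Γ) (h0 : ∅ ∈ Γ)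
    (hCM : IsSeqCMMod n K (MvPolynomial (Fin n) K ⧸ SRIdeal n K Γ)) :
    ∃ F, IsFacet Γ F ∧
      DD (mIdeal n K) F.card (MvPolynomial (Fin n) K ⧸ SRIdeal n K Γ) := by
  have : Nontrivial (MvPolynomial (Fin n) K ⧸ SRIdeal n K Γ) :=
    Ideal.Quotient.nontrivial_iff.2 fun ht =>
      (mIdeal_isPrime (n := n) (K := K)).ne_top (top_le_iff.1 (ht ▸ SR_le_m h0))
  obtain ⟨p, hp, hD⟩ := seqCM_DD _ hCM
  obtain ⟨F, hF, rfl⟩ := assoc_eq_facePrime h hp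
  exact ⟨F, hF, hD _ (le_dim_facePrime F)⟩

theorem sub_bigh_le {Γ : Set (Finset (Fin n))} (h : ∀ F ∈ Γ, ∀ G, G ⊆ F → G ∈ Γ)
    {F : Finset (Fin n)} (hF : IsFacet Γ F) :
    (n : ℕ∞) - bigh (SRIdeal n K Γ) ≤ F.card := by
  have h1 : ((n - F.card : ℕ) : ℕ∞) ≤ bigh (SRIdeal n K Γ) := by
    refine le_trans ?_ (le_iSup₂ (f := fun p _ => htP p) _ (facePrime_mem_assoc h hF))
    rw [htP_eq]
    refine le_trans ?_ (le_height_facePrime F)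
    rw [Finset.card_sdiff_of_subset (Finset.subset_univ F), Finset.card_univ, Fintype.card_fin]
  refine le_trans (tsub_le_tsub_left h1 _) ?_
  norm_cast
  have := Finset.card_le_univ F
  rw [Fintype.card_fin] at this
  omega

end Main

/-- If `Δ` has a shedding vertex `v` with `link_Δ(v)` and `del_Δ(v)` sequentially
Cohen-Macaulay, then
`depth R/I_Δ = min {depth R/(I_Δ : x_v), depth R/(I_Δ, x_v)} = n - bigh(I_Δ)`. -/
theorem statement_3 (n : ℕ) (K : Type) [Field K] (Δ : Set (Finset (Fin n)))
    (hΔ : IsComplex Δ) (hvert : ∀ u : Fin n, {u} ∈ Δ) (v : Fin n)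
    (hv : IsSheddingVertex Δ v)
    (hlink : IsSeqCMMod n K (MvPolynomial (Fin n) K ⧸ SRIdeal n K (linkC Δ v)))
    (hdel : IsSeqCMMod n K (MvPolynomial (Fin n) K ⧸ SRIdeal n K (delC Δ v))) :
    depth (mIdeal n K) (MvPolynomial (Fin n) K ⧸ SRIdeal n K Δ) =
        min (depth (mIdeal n K)
              (MvPolynomial (Fin n) K ⧸ (SRIdeal n K Δ).colon (Ideal.span {(X v : MvPolynomial (Fin n) K)})))
          (depth (mIdeal n K)
              (MvPolynomial (Fin n) K ⧸ (SRIdeal n K Δ + Ideal.span {(X v : MvPolynomial (Fin n) K)}))) ∧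
    depth (mIdeal n K) (MvPolynomial (Fin n) K ⧸ SRIdeal n K Δ) =
        (n : ℕ∞) - bigh (SRIdeal n K Δ) := by
  have hd := hΔ.2
  have he : (∅ : Finset (Fin n)) ∈ Δ := hd _ (hvert v) _ (Finset.empty_subset _)
  have heS : (∅ : Finset (Fin n)) ∈ starC Δ v := by
    change insert v ∅ ∈ Δ
    simpa using hvert v
  have heD : (∅ : Finset (Fin n)) ∈ delC Δ v := ⟨he, by simp⟩
  have hdS := starC_down hd v
  have hdD := delC_down hd v
  have hm : mIdeal n K ≠ ⊤ := mIdeal_isPrime.ne_top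
  -- the number `e = n - bigh(I)`
  obtain ⟨e, hee⟩ : ∃ e : ℕ, (e : ℕ∞) = (n : ℕ∞) - bigh (SRIdeal n K Δ) := by
    have : (n : ℕ∞) - bigh (SRIdeal n K Δ) ≠ ⊤ :=
      ne_top_of_le_ne_top (ENat.natCast_ne_top n) tsub_le_self
    exact ENat.ne_top_iff_exists.1 this
  have hfac : ∀ F, IsFacet Δ F → e ≤ F.card := by
    intro F hF
    have := sub_bigh_le (K := K) hd hF
    rw [← hee] at this
    exact_mod_cast this
  -- Ext-vanishing for the deletion
  have hDdel : DD (mIdeal n K) e (MvPolynomial (Fin n) K ⧸ SRIdeal n K (delC Δ v)) := by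
    obtain ⟨F, hF, hD⟩ := seqCM_facet hdD heD hdel
    exact hD.mono (hfac F (hv.2 F hF))
  -- Ext-vanishing for the star
  have hDstar : DD (mIdeal n K) e (MvPolynomial (Fin n) K ⧸ SRIdeal n K (starC Δ v)) := by
    rw [← delC_starC hd v] at hlink
    obtain ⟨F, hF, hD⟩ := seqCM_facet (delC_down hdS v) ⟨heS, by simp⟩ hlink
    rw [← SR_add hdS v] at hD
    have hXm : (X v : MvPolynomial (Fin n) K) ∈ mIdeal n K := Ideal.subset_span ⟨v, rfl⟩
    have hss : starC (starC Δ v) v = starC Δ v := by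
      ext G; simp [starC]
    have hreg : ∀ a, (X v : MvPolynomial (Fin n) K) * a ∈ SRIdeal n K (starC Δ v) →
        a ∈ SRIdeal n K (starC Δ v) := by
      intro a ha
      rw [X_mul_mem_SR hdS, hss] at ha
      exact ha
    have h2 := DD.of_add_span (J := mIdeal n K) (SRIdeal n K (starC Δ v)) (X v) hXm hreg hD
    refine h2.mono ?_
    rw [← Finset.card_insert_of_notMem hF.1.2]
    refine hfac _ ⟨hF.1.1, fun G hG hsub => ?_⟩
    have hvG : v ∈ G := hsub (Finset.mem_insert_self v F)
    have h3 := hF.2 (G.erase v) ⟨by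
      change insert v (G.erase v) ∈ Δ
      rwa [Finset.insert_erase hvG], by simp⟩ (by
        intro i hi
        refine Finset.mem_erase.2 ⟨?_, hsub (Finset.mem_insert_of_mem hi)⟩
        rintro rfl
        exact hF.1.2 hi)
    rw [← h3, Finset.insert_erase hvG]
  have hDΔ : DD (mIdeal n K) e (MvPolynomial (Fin n) K ⧸ SRIdeal n K Δ) := by
    apply DD.of_colon_add _ (X v)
    · rw [SR_colon hd]; exact hDstar
    · rw [SR_add hd]; exact hDdel
  have hassne : (associatedPrimes (MvPolynomial (Fin n) K)
      (MvPolynomial (Fin n) K ⧸ SRIdeal n K Δ)).Nonempty := by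
    obtain ⟨F, hF, -⟩ := exists_facet Δ ∅ he
    exact ⟨_, facePrime_mem_assoc hd hF⟩
  have hdepth : depth (mIdeal n K) (MvPolynomial (Fin n) K ⧸ SRIdeal n K Δ) =
      (n : ℕ∞) - bigh (SRIdeal n K Δ) := by
    apply le_antisymm
    · refine le_sub_bigh _ _ _ hassne fun p hp k hk => ?_
      obtain ⟨F, hF, rfl⟩ := assoc_eq_facePrime hd hp
      exact depth_upper hd hF k hk
    · rw [← hee]
      exact hDΔ.le_depth (smul_top_lt _ _ (SR_le_m he) hm)
  refine ⟨?_, hdepth⟩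
  rw [hdepth, SR_colon hd, SR_add hd]
  apply le_antisymm
  · rw [← hee]
    exact le_min (hDstar.le_depth (smul_top_lt _ _ (SR_le_m heS) hm))
      (hDdel.le_depth (smul_top_lt _ _ (SR_le_m heD) hm))
  · refine le_sub_bigh _ _ _ hassne fun p hp k hk => ?_
    obtain ⟨F, hF, rfl⟩ := assoc_eq_facePrime hd hp
    by_cases hvF : v ∈ F
    · refine depth_upper hdS ⟨?_, fun G hG hsub => ?_⟩ k (hk.trans (min_le_left _ _))
      · change insert v F ∈ Δ
        rw [Finset.insert_eq_of_mem hvF]; exact hF.1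
      · have := hF.2 _ hG (hsub.trans (Finset.subset_insert v G))
        refine le_antisymm ?_ hsub
        rw [← this]
        exact Finset.subset_insert v G
    · exact depth_upper hdD ⟨⟨hF.1, hvF⟩, fun G hG hsub => hF.2 G hG.1 hsub⟩ k
        (hk.trans (min_le_right _ _))

end Paper
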